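/- Let μ be an affinely irreducible self-similar measure on ℝ^d. Then μ(Sing_d) = 0, i.e. μ-almost every x ∈ ℝ^d is not a singular vector. -/

import Mathlib

noncomputable section
open MeasureTheory Metric Filter Topology

variable {E : Type*} [NormedAddCommGroup E] [NormedSpace ℝ E]

/-- `f` is a contraction with ratio `r ∈ (0,1)`. -/
def IsContractionWith (r : ℝ) (f : E → E) : Prop :=
  0 < r ∧ r < 1 ∧ ∀ x y, ‖f x - f y‖ ≤ r * ‖x - y‖

/-- `f` is a contracting similarity with ratio `r ∈ (0,1)`. -/
def IsSimilarityWith (r : ℝ) (f : E → E) : Prop :=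
  0 < r ∧ r < 1 ∧ ∀ x y, ‖f x - f y‖ = r * ‖x - y‖

/-- A self-conformal IFS. -/
def IsSelfConformalIFS {A : Type*} [Fintype A] (φ : A → E → E) : Prop :=
  2 ≤ Fintype.card A ∧
  (∀ a, ∃ r, IsContractionWith r (φ a)) ∧
  (∀ a, ContDiff ℝ 1 (φ a)) ∧
  (∀ a x, 0 < ‖fderiv ℝ (φ a) x‖ ∧ ∀ v, ‖fderiv ℝ (φ a) x v‖ = ‖fderiv ℝ (φ a) x‖ * ‖v‖) ∧
  (∃ H α₀ : ℝ, 0 < H ∧ 0 < α₀ ∧ ∀ a x y,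
    |‖fderiv ℝ (φ a) x‖ - ‖fderiv ℝ (φ a) y‖| ≤ H * ‖x - y‖ ^ α₀) ∧
  (∃ a₁ a₂ x₁ x₂, φ a₁ x₁ = x₁ ∧ φ a₂ x₂ = x₂ ∧ x₁ ≠ x₂)

/-- A self-similar IFS. -/
def IsSelfSimilarIFS {A : Type*} [Fintype A] (φ : A → E → E) : Prop :=
  2 ≤ Fintype.card A ∧
  (∀ a, ∃ r, IsSimilarityWith r (φ a)) ∧
  (∃ a₁ a₂ x₁ x₂, φ a₁ x₁ = x₁ ∧ φ a₂ x₂ = x₂ ∧ x₁ ≠ x₂)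

/-- The IFS is affinely irreducible: no (nonempty) proper affine subspace is preserved. -/
def AffinelyIrreducible {A : Type*} (φ : A → E → E) : Prop :=
  ¬ ∃ W : AffineSubspace ℝ E, (W : Set E).Nonempty ∧ W ≠ ⊤ ∧
      ∀ a, φ a '' (W : Set E) ⊆ (W : Set E)

/-- Closed `ε`-neighbourhood of an affine subspace. -/
def affNbhd (W : AffineSubspace ℝ E) (ε : ℝ) : Set E :=
  {y | Metric.infDist y (W : Set E) ≤ ε}

/-- topological support of a measure -/
def msupport [MeasurableSpace E] (μ : Measure E) : Set E :=
  {x | ∀ r : ℝ, 0 < r → 0 < μ (Metric.ball x r)}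

/-- distance between two sets -/
def setDist (S T : Set E) : ℝ := sInf (Set.image2 dist S T)

/-- map corresponding to a finite word (as a list) -/
def listMap {A : Type*} (φ : A → E → E) : List A → E → E
  | [] => id
  | a :: l => φ a ∘ listMap φ l

/-- map corresponding to the first `n` letters of an infinite word -/
def wordMap {A : Type*} (φ : A → E → E) : ℕ → (ℕ → A) → E → E
  | 0, _ => id
  | n + 1, a => φ (a 0) ∘ wordMap φ n (fun k => a (k + 1))

/-- set of `Ψ`-well-approximable vectors in `ℝ^d` -/
def WApprox (d : ℕ) (Ψ : ℕ → ℝ) : Set (EuclideanSpace ℝ (Fin d)) :=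
  {x | {pq : (Fin d → ℤ) × ℕ | 0 < pq.2 ∧
        ∀ i, |x i - (pq.1 i : ℝ) / (pq.2 : ℝ)| ≤ Ψ pq.2}.Infinite}

/-- set of singular vectors in `ℝ^d` -/
def Sing (d : ℕ) : Set (EuclideanSpace ℝ (Fin d)) :=
  {x | ∀ c : ℝ, 0 < c → ∃ T : ℝ, 0 < T ∧ ∀ t : ℝ, T ≤ t →
    ∃ q : ℕ, 0 < q ∧ (q : ℝ) < t ∧
      ∀ i, |(q : ℝ) * x i - round ((q : ℝ) * x i)| ≤ c * t ^ (-(1 : ℝ) / (d : ℝ))}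

/-!
Two facts about a self-similar measure `μ` drive the proof. First, localization: if a set is, inside
every ball of radius `ρ`, contained in a slab of half-width `τ * ρ`, then rescaling the ball along
the IFS until it carries all of `μ` bounds the mass of the set by the largest mass of a slab of
half-width `≍ τ`. Applied to slabs themselves, this makes the slab concentration submultiplicative
in the width; irreducibility and compactness make it less than `1` at some scale, so it decays like
a power `ε ^ α`.

Second, the simplex lemma: the rational points with denominator at most `u ^ d` in a ball of radius
`≍ u ^ (-(d + 1))` lie on one hyperplane, since `d + 1` affinely independent ones would span a
simplex of volume smaller than the reciprocal of its common denominator allows. Hence the set of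
points `x` with `‖q x‖ ≤ δ` for some `q ≍ u ^ d` is flat at that scale, with relative width `δ * u`,
and has mass `≲ (δ * u) ^ α`. Summing over dyadic `u`, the set where Dirichlet's theorem is improved
by `c` at a given time has mass `≲ c ^ α`. A singular vector lies in these sets for all large times,
so letting `c → 0` gives the result.
-/

open scoped ENNReal NNReal

theorem scale_induction {ι : Type*} {r : ι → ℝ} {s t R : ℝ} {P : ℝ → Prop}
    (hs : 0 < s) (hsr : ∀ i, s ≤ r i) (hrt : ∀ i, r i ≤ t) (ht : t < 1) (hR : 0 < R)
    (base : ∀ ρ, R ≤ ρ → ρ ≤ R / s → P ρ)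
    (step : ∀ ρ, 0 < ρ → ρ < R → (∀ i, P (ρ / r i)) → P ρ)
    {ρ : ℝ} (hρ : 0 < ρ) (hρs : ρ ≤ R / s) : P ρ := by
  obtain ⟨k, hk⟩ := exists_pow_lt_of_lt_one (div_pos hρ hR) ht
  replace hk : t ^ k * R ≤ ρ := ((lt_div_iff₀ hR).1 hk).le
  induction k generalizing ρ with
  | zero => exact base ρ (by simpa using hk) hρs
  | succ k ih =>
    rcases le_or_gt R ρ with hRρ | hρR
    · exact base ρ hRρ hρs
    refine step ρ hρ hρR fun i => ?_
    have hri : 0 < r i := hs.trans_le (hsr i)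
    have ht₀ : 0 < t := hri.trans_le (hrt i)
    refine ih (div_pos hρ hri) (div_le_div₀ hR.le hρR.le hs (hsr i)) ?_
    rw [le_div_iff₀ hri]
    calc t ^ k * R * r i ≤ t ^ k * R * t := by gcongr; exact hrt i
      _ = t ^ (k + 1) * R := by ring
      _ ≤ ρ := hk

theorem exists_le_ofReal_rpow_of_le_mul {Q : ℝ → ℝ≥0∞} {θ : ℝ≥0} {M ε₀ : ℝ} (hθ₀ : 0 < θ)
    (hθ : θ < 1) (hM : 1 < M) (hε₀ : 0 < ε₀) (hQ : ∀ ε, Q ε ≤ 1)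
    (hQM : ∀ ε, 0 < ε → ε < ε₀ → Q ε ≤ θ * Q (M * ε)) :
    ∃ L α : ℝ, 0 < L ∧ 0 < α ∧ ∀ ε, 0 < ε → Q ε ≤ ENNReal.ofReal ((L * ε) ^ α) := by
  have hM₀ : 0 < M := one_pos.trans hM
  set α := Real.logb M (θ : ℝ)⁻¹
  have hα : 0 < α :=
    Real.logb_pos hM ((one_lt_inv₀ (by exact_mod_cast hθ₀)).2 (by exact_mod_cast hθ))
  have hMα : M ^ α = (θ : ℝ)⁻¹ := Real.rpow_logb hM₀ hM.ne' (by positivity)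
  have base : ∀ ε, ε₀ ≤ ε → Q ε ≤ ENNReal.ofReal ((ε₀⁻¹ * ε) ^ α) := fun ε hε =>
    (hQ ε).trans <| ENNReal.one_le_ofReal.2 <|
      Real.one_le_rpow ((le_inv_mul_iff₀ hε₀).2 (by simpa using hε)) hα.le
  refine ⟨ε₀⁻¹, α, inv_pos.2 hε₀, hα, fun ε hε => ?_⟩
  rcases le_or_gt ε₀ ε with h | h
  · exact base ε h
  refine scale_induction (r := fun _ : Unit => M⁻¹) (inv_pos.2 hM₀) (fun _ => le_rfl)
    (fun _ => le_rfl) (inv_lt_one_of_one_lt₀ hM) hε₀ (fun ε hε _ => base ε hε)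
    (fun ε hε hεε₀ ih => ?_) hε (h.le.trans ?_)
  · have hscale : (ε₀⁻¹ * (M * ε)) ^ α = (θ : ℝ)⁻¹ * (ε₀⁻¹ * ε) ^ α := by
      rw [← hMα, ← Real.mul_rpow hM₀.le (by positivity), mul_left_comm]
    calc Q ε ≤ θ * Q (M * ε) := hQM ε hε hεε₀
      _ ≤ ENNReal.ofReal θ * ENNReal.ofReal ((ε₀⁻¹ * (M * ε)) ^ α) := by
        rw [ENNReal.ofReal_coe_nnreal]
        gcongr
        simpa [mul_comm M] using ih ()
      _ = ENNReal.ofReal ((ε₀⁻¹ * ε) ^ α) := by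
        rw [← ENNReal.ofReal_mul (NNReal.coe_nonneg θ), hscale,
          mul_inv_cancel_left₀ (by exact_mod_cast hθ₀.ne')]
  · rw [div_inv_eq_mul]
    exact le_mul_of_one_le_right hε₀.le hM.le

theorem measure_le_of_forall_eventually_mem {X : Type*} [MeasurableSpace X] {μ : Measure X}
    {S : Set X} {s : ℕ → Set X} {c : ℝ≥0∞} (hS : ∀ x ∈ S, ∀ᶠ n in atTop, x ∈ s n)
    (hs : ∀ n, μ (s n) ≤ c) : μ S ≤ c := by
  have hsub : S ⊆ ⋃ n, ⋂ m ≥ n, s m := fun x hx => by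
    simpa [eventually_atTop] using hS x hx
  have hmono : Monotone fun n => ⋂ m ≥ n, s m := fun _ _ h =>
    Set.biInter_subset_biInter_left fun _ => h.trans
  calc μ S ≤ μ (⋃ n, ⋂ m ≥ n, s m) := measure_mono hsub
    _ = ⨆ n, μ (⋂ m ≥ n, s m) := hmono.measure_iUnion
    _ ≤ c := iSup_le fun n => (measure_mono (Set.biInter_subset_of_mem (le_refl n))).trans (hs n)

/-- The closed `ε`-neighbourhood of the hyperplane `f = b`, for a functional `f` of norm one. -/
def slab (f : StrongDual ℝ E) (b ε : ℝ) : Set E :=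
  f ⁻¹' closedBall b ε

theorem slab_subset_slab {f : StrongDual ℝ E} {b ε ε' : ℝ} (h : ε ≤ ε') :
    slab f b ε ⊆ slab f b ε' :=
  Set.preimage_mono (closedBall_subset_closedBall h)

theorem isClosed_slab (f : StrongDual ℝ E) (b ε : ℝ) : IsClosed (slab f b ε) :=
  isClosed_closedBall.preimage f.continuous

theorem dist_apply_le_of_norm_eq_one {f : StrongDual ℝ E} (hf : ‖f‖ = 1) (x y : E) :
    dist (f x) (f y) ≤ dist x y := by
  simpa [hf] using f.dist_le_opNorm x y

theorem slab_inter_closedBall_subset (f g : StrongDual ℝ E) (b c ε R : ℝ) :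
    slab f b ε ∩ closedBall 0 R ⊆ slab g c (‖g - f‖ * R + ε + dist b c) := by
  rintro x ⟨hx, hxR⟩
  have hfg : dist (g x) (f x) ≤ ‖g - f‖ * R :=
    ((g - f).le_opNorm x).trans (by gcongr; simpa using hxR)
  calc dist (g x) c ≤ dist (g x) (f x) + dist (f x) b + dist b c := dist_triangle4 ..
    _ ≤ ‖g - f‖ * R + ε + dist b c := by gcongr; exact hx

/-- Every ball of radius `ρ` that meets `S` is contained in `T`, and meets `S` inside a slab of
half-width `ε`. Both conditions rescale along similarities, so they can be transported from a
small ball to one carrying the whole measure. -/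
def IsFlatIn (S T : Set E) (ρ ε : ℝ) : Prop :=
  ∀ z, (S ∩ closedBall z ρ).Nonempty →
    closedBall z ρ ⊆ T ∧ ∃ f : StrongDual ℝ E, ‖f‖ = 1 ∧ ∃ b, S ∩ closedBall z ρ ⊆ slab f b ε

theorem isFlatIn_slab {f : StrongDual ℝ E} (hf : ‖f‖ = 1) {b ρ ε ε' : ℝ} (h : ε + 2 * ρ ≤ ε') :
    IsFlatIn (slab f b ε) (slab f b ε') ρ ε := by
  rintro z ⟨x, hx, hxz⟩
  refine ⟨fun y hy => ?_, f, hf, b, Set.inter_subset_left⟩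
  calc dist (f y) b ≤ dist (f y) (f x) + dist (f x) b := dist_triangle ..
    _ ≤ 2 * ρ + ε := by
      gcongr
      · refine (dist_apply_le_of_norm_eq_one hf y x).trans ?_
        linarith [dist_triangle_right y x z, mem_closedBall.1 hxz, mem_closedBall.1 hy]
      · exact hx
    _ ≤ ε' := by linarith

namespace IsSimilarityWith

variable {X : Type*} [NormedAddCommGroup X] {r : ℝ} {ψ : X → X} {φ : E → E}

theorem dist_eq (h : IsSimilarityWith r ψ) (x y : X) : dist (ψ x) (ψ y) = r * dist x y := by
  simpa only [dist_eq_norm] using h.2.2 x y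

theorem continuous (h : IsSimilarityWith r ψ) : Continuous ψ :=
  (LipschitzWith.of_dist_le_mul (K := ⟨r, h.1.le⟩) fun x y => (h.dist_eq x y).le).continuous

variable [StrictConvexSpace ℝ E] [FiniteDimensional ℝ E]

theorem exists_linearIsometryEquiv (h : IsSimilarityWith r φ) :
    ∃ L : E ≃ₗᵢ[ℝ] E, ∀ x, φ x = r • L x + φ 0 := by
  have hr : 0 < r := h.1
  have hiso : Isometry fun x => r⁻¹ • φ x := Isometry.of_dist_eq fun x y => by
    rw [dist_smul₀, h.dist_eq, Real.norm_of_nonneg (by positivity), inv_mul_cancel_left₀ hr.ne']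
  let g := hiso.affineIsometryOfStrictConvexSpace
  refine ⟨g.linearIsometry.toLinearIsometryEquiv rfl, fun x => ?_⟩
  have hg : g x = g.linearIsometry x + g 0 := by simpa using g.map_vadd 0 x
  calc φ x = r • g x := (smul_inv_smul₀ hr.ne' (φ x)).symm
    _ = r • g.linearIsometry x + r • g 0 := by rw [hg, smul_add]
    _ = _ := congrArg _ (smul_inv_smul₀ hr.ne' (φ 0))

theorem exists_affineMap (h : IsSimilarityWith r φ) : ∃ g : E →ᵃ[ℝ] E, ⇑g = φ := by
  obtain ⟨L, hL⟩ := h.exists_linearIsometryEquiv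
  refine ⟨r • L.toLinearEquiv.toLinearMap.toAffineMap + AffineMap.const ℝ E (φ 0), ?_⟩
  ext x
  exact (hL x).symm

theorem exists_preimage_slab (h : IsSimilarityWith r φ) {f : StrongDual ℝ E} (hf : ‖f‖ = 1)
    (b : ℝ) : ∃ g : StrongDual ℝ E, ‖g‖ = 1 ∧ ∃ c, ∀ ε, φ ⁻¹' slab f b ε = slab g c (ε / r) := by
  obtain ⟨L, hL⟩ := h.exists_linearIsometryEquiv
  have hr : 0 < r := h.1
  refine ⟨f.comp (L : E →L[ℝ] E), by simpa using hf, r⁻¹ * (b - f (φ 0)), fun ε => ?_⟩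
  ext x
  have hdist : dist (f (φ x)) b = r * dist (f (L x)) (r⁻¹ * (b - f (φ 0))) := by
    rw [hL, Real.dist_eq, Real.dist_eq, ← abs_of_pos hr, ← abs_mul, abs_of_pos hr]
    congr 1
    simp only [map_add, map_smul, smul_eq_mul]
    field_simp
    ring
  change dist (f (φ x)) b ≤ ε ↔ dist (f (L x)) _ ≤ ε / r
  rw [hdist, le_div_iff₀' hr]

theorem isFlatIn_preimage (h : IsSimilarityWith r φ) {S T : Set E} {ρ ε : ℝ}
    (hST : IsFlatIn S T ρ ε) : IsFlatIn (φ ⁻¹' S) (φ ⁻¹' T) (ρ / r) (ε / r) := by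
  have hball (z : E) : φ ⁻¹' closedBall (φ z) ρ = closedBall z (ρ / r) := by
    ext x
    simp only [Set.mem_preimage, mem_closedBall, h.dist_eq, le_div_iff₀' h.1]
  rintro z ⟨x, hxS, hxz⟩
  rw [← hball] at hxz ⊢
  obtain ⟨hT, f, hf, b, hS⟩ := hST (φ z) ⟨φ x, hxS, hxz⟩
  obtain ⟨g, hg, c, hc⟩ := h.exists_preimage_slab hf b
  exact ⟨Set.preimage_mono hT, g, hg, c, hc ε ▸ Set.preimage_mono hS⟩

end IsSimilarityWith

section Concentration

variable [MeasurableSpace E] {μ : Measure E}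

/-- The Lévy concentration function of `μ` for slabs: the largest mass of a slab of half-width
`ε`, as a function of `ε`. -/
def slabConcentration (μ : Measure E) (ε : ℝ) : ℝ≥0∞ :=
  ⨆ (f : StrongDual ℝ E) (_ : ‖f‖ = 1) (b : ℝ), μ (slab f b ε)

theorem slabConcentration_le_iff {ε : ℝ} {c : ℝ≥0∞} :
    slabConcentration μ ε ≤ c ↔ ∀ f : StrongDual ℝ E, ‖f‖ = 1 → ∀ b, μ (slab f b ε) ≤ c := by
  simp only [slabConcentration, iSup_le_iff]

theorem measure_slab_le {f : StrongDual ℝ E} (hf : ‖f‖ = 1) (b ε : ℝ) :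
    μ (slab f b ε) ≤ slabConcentration μ ε :=
  slabConcentration_le_iff.1 le_rfl f hf b

theorem slabConcentration_mono (μ : Measure E) : Monotone (slabConcentration μ) := fun _ _ h =>
  slabConcentration_le_iff.2 fun _ hf b =>
    (measure_mono (slab_subset_slab h)).trans (measure_slab_le hf b _)

theorem slabConcentration_le_one (μ : Measure E) [IsProbabilityMeasure μ] (ε : ℝ) :
    slabConcentration μ ε ≤ 1 :=
  slabConcentration_le_iff.2 fun _ _ _ => prob_le_one

theorem IsFlatIn.measure_le [IsProbabilityMeasure μ] {S T : Set E} {ρ ε : ℝ} {z : E}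
    (h : IsFlatIn S T ρ ε) (hz : ∀ᵐ x ∂μ, x ∈ closedBall z ρ) :
    μ S ≤ slabConcentration μ ε * μ T := by
  rcases (S ∩ closedBall z ρ).eq_empty_or_nonempty with hempty | hne
  · have hS : μ S = 0 := measure_eq_zero_iff_ae_notMem.2 <| hz.mono fun x hx hxS =>
      hempty.subset ⟨hxS, hx⟩
    simp [hS]
  obtain ⟨hT, f, hf, b, hS⟩ := h z hne
  have hT₁ : μ T = 1 := prob_le_one.antisymm <| measure_univ.ge.trans <|
    measure_mono_ae <| hz.mono fun x hx _ => hT hx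
  calc μ S ≤ μ (slab f b ε) := measure_mono_ae <| hz.mono fun x hx hxS => hS ⟨hxS, hx⟩
    _ ≤ slabConcentration μ ε * μ T := by
      rw [hT₁, mul_one]
      exact measure_slab_le hf b ε

theorem measure_slab_eq_zero {R : ℝ} (hR : ∀ᵐ x ∂μ, x ∈ closedBall 0 R) {f : StrongDual ℝ E}
    (hf : ‖f‖ = 1) {b ε : ℝ} (hb : R + ε < |b|) : μ (slab f b ε) = 0 := by
  refine measure_eq_zero_iff_ae_notMem.2 <| hR.mono fun x hx hxb => hb.not_ge ?_
  have hfx : |f x| ≤ R := by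
    simpa using (dist_apply_le_of_norm_eq_one hf x 0).trans hx
  calc |b| = |f x - (f x - b)| := by rw [sub_sub_cancel]
    _ ≤ |f x| + |f x - b| := abs_sub _ _
    _ ≤ R + ε := add_le_add hfx hxb

variable [OpensMeasurableSpace E] [IsFiniteMeasure μ] {a : ℝ≥0∞}

theorem exists_measure_slab_lt {f : StrongDual ℝ E} {b : ℝ} (h : μ (f ⁻¹' {b}) < a) :
    ∃ ε > 0, μ (slab f b ε) < a := by
  have hlim : Tendsto (fun ε => μ.map f (cthickening ε {b})) (𝓝 0) (𝓝 (μ.map f {b})) :=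
    tendsto_measure_cthickening_of_isClosed ⟨1, one_pos, measure_ne_top _ _⟩ isClosed_singleton
  have hmap {s : Set ℝ} (hs : IsClosed s) : μ.map f s = μ (f ⁻¹' s) :=
    Measure.map_apply f.continuous.measurable hs.measurableSet
  rw [hmap isClosed_singleton] at hlim
  obtain ⟨ε, hεa, hε : 0 < ε⟩ :=
    (((hlim.eventually_lt_const h).filter_mono nhdsWithin_le_nhds).and
      (self_mem_nhdsWithin (s := Set.Ioi 0))).exists
  rw [hmap isClosed_cthickening, cthickening_singleton _ hε.le] at hεa
  exact ⟨ε, hε, hεa⟩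

theorem exists_nhds_measure_slab_le {R : ℝ} (hR : ∀ᵐ x ∂μ, x ∈ closedBall 0 R)
    {f : StrongDual ℝ E} {b : ℝ} (h : μ (f ⁻¹' {b}) < a) :
    ∃ s ∈ 𝓝 (f, b), ∃ ε > 0, ∃ a' < a, ∀ q ∈ s, μ (slab q.1 q.2 ε) ≤ a' := by
  obtain ⟨ε, hε, hεa⟩ := exists_measure_slab_lt h
  have hcont : Continuous fun q : StrongDual ℝ E × ℝ => ‖f - q.1‖ * R + ε / 2 + dist q.2 b := by
    fun_prop
  have hnear : ∀ᶠ q : StrongDual ℝ E × ℝ in 𝓝 (f, b),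
      ‖f - q.1‖ * R + ε / 2 + dist q.2 b < ε :=
    hcont.continuousAt.eventually_lt_const (by simpa using hε)
  refine ⟨_, hnear, ε / 2, half_pos hε, _, hεa, fun q hq => ?_⟩
  refine measure_mono_ae <| hR.mono fun x hx hxq => ?_
  exact slab_subset_slab (le_of_lt hq) (slab_inter_closedBall_subset _ _ _ _ _ _ ⟨hxq, hx⟩)

theorem exists_slabConcentration_lt [FiniteDimensional ℝ E] {R : ℝ}
    (hR : ∀ᵐ x ∂μ, x ∈ closedBall 0 R) (ha : 0 < a)
    (h : ∀ f : StrongDual ℝ E, ‖f‖ = 1 → ∀ b : ℝ, μ (f ⁻¹' {b}) < a) :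
    ∃ ε > 0, slabConcentration μ ε < a := by
  have : ProperSpace (StrongDual ℝ E) := FiniteDimensional.proper ℝ _
  have hcompact : IsCompact (sphere (0 : StrongDual ℝ E) 1 ×ˢ closedBall (0 : ℝ) (R + 1)) :=
    (isCompact_sphere _ _).prod (isCompact_closedBall _ _)
  obtain ⟨ε, hε, a', ha', hball⟩ : ∃ ε > 0, ∃ a' < a,
      ∀ q ∈ sphere (0 : StrongDual ℝ E) 1 ×ˢ closedBall (0 : ℝ) (R + 1),
        μ (slab q.1 q.2 ε) ≤ a' := by
    refine hcompact.induction_on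
      (p := fun s => ∃ ε > 0, ∃ a' < a, ∀ q ∈ s, μ (slab q.1 q.2 ε) ≤ a')
      ⟨1, one_pos, 0, ha, by simp⟩ ?_ ?_ ?_
    · rintro s t hst ⟨ε, hε, a', ha', hs⟩
      exact ⟨ε, hε, a', ha', fun q hq => hs q (hst hq)⟩
    · rintro s t ⟨ε, hε, a₁, ha₁, hs⟩ ⟨ε', hε', a₂, ha₂, ht⟩
      refine ⟨min ε ε', lt_min hε hε', max a₁ a₂, max_lt ha₁ ha₂, ?_⟩
      rintro q (hq | hq)
      · exact (measure_mono (slab_subset_slab (min_le_left _ _))).trans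
          ((hs q hq).trans (le_max_left _ _))
      · exact (measure_mono (slab_subset_slab (min_le_right _ _))).trans
          ((ht q hq).trans (le_max_right _ _))
    · rintro ⟨f, b⟩ ⟨hf, -⟩
      obtain ⟨s, hs, hsa⟩ := exists_nhds_measure_slab_le hR (h f (by simpa using hf) b)
      exact ⟨s, mem_nhdsWithin_of_mem_nhds hs, hsa⟩
  refine ⟨min ε (1 / 2), by positivity, lt_of_le_of_lt ?_ ha'⟩
  refine slabConcentration_le_iff.2 fun f hf b => ?_
  rcases le_or_gt |b| (R + 1) with hb | hb
  · exact (measure_mono (slab_subset_slab (min_le_left _ _))).trans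
      (hball (f, b) ⟨by simpa using hf, by simpa using hb⟩)
  · have hnull : μ (slab f b (min ε (1 / 2))) = 0 :=
      measure_slab_eq_zero hR hf (by linarith [min_le_right ε (1 / 2)])
    exact hnull.trans_le bot_le

end Concentration

theorem tendsto_measure_compl_closedBall {X : Type*} [PseudoMetricSpace X] [MeasurableSpace X]
    [OpensMeasurableSpace X] (μ : Measure X) [IsFiniteMeasure μ] (x : X) :
    Tendsto (fun R => μ (closedBall x R)ᶜ) atTop (𝓝 0) := by
  have hempty : ⋂ R, (closedBall x R)ᶜ = ∅ :=
    Set.eq_empty_of_forall_notMem fun y hy =>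
      Set.mem_iInter.1 hy (dist y x) (mem_closedBall.2 le_rfl)
  have hlim := tendsto_measure_iInter_atTop (μ := μ) (s := fun R => (closedBall x R)ᶜ)
    (fun _ => measurableSet_closedBall.compl.nullMeasurableSet)
    (fun _ _ h => Set.compl_subset_compl.2 (closedBall_subset_closedBall h))
    ⟨0, measure_ne_top _ _⟩
  rwa [hempty, measure_empty] at hlim

/-- `μ` is a self-similar measure: it is stationary for the similarities `φ a` of ratio `r a`,
chosen with probability `w a`. -/
structure IsSelfSimilarMeasure {X A : Type*} [NormedAddCommGroup X] [MeasurableSpace X]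
    [Fintype A] (φ : A → X → X) (r : A → ℝ) (w : A → ℝ≥0∞) (μ : Measure X) : Prop where
  isSimilarityWith : ∀ a, IsSimilarityWith (r a) (φ a)
  weight_ne_zero : ∀ a, w a ≠ 0
  sum_weight : ∑ a, w a = 1
  stationary : μ = ∑ a, w a • μ.map (φ a)

namespace IsSelfSimilarMeasure

section Normed

variable {X A : Type*} [NormedAddCommGroup X] [MeasurableSpace X] [Fintype A]
  {φ : A → X → X} {r : A → ℝ} {w : A → ℝ≥0∞} {μ : Measure X}

theorem nonempty_index (h : IsSelfSimilarMeasure φ r w μ) : Nonempty A := by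
  by_contra hA
  rw [not_nonempty_iff] at hA
  simpa using h.sum_weight

theorem exists_ratio_bounds (h : IsSelfSimilarMeasure φ r w μ) :
    ∃ s t : ℝ, 0 < s ∧ 0 < t ∧ t < 1 ∧ ∀ a, s ≤ r a ∧ r a ≤ t := by
  have := h.nonempty_index
  obtain ⟨a, ha⟩ := Finite.exists_min r
  obtain ⟨b, hb⟩ := Finite.exists_max r
  exact ⟨r a, r b, (h.isSimilarityWith a).1, (h.isSimilarityWith b).1, (h.isSimilarityWith b).2.1,
    fun c => ⟨ha c, hb c⟩⟩

variable [BorelSpace X]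

theorem measure_eq_sum (h : IsSelfSimilarMeasure φ r w μ) {S : Set X} (hS : MeasurableSet S) :
    μ S = ∑ a, w a * μ (φ a ⁻¹' S) := by
  conv_lhs => rw [h.stationary]
  simp only [Measure.coe_finsetSum, Finset.sum_apply, Measure.smul_apply, smul_eq_mul,
    Measure.map_apply (h.isSimilarityWith _).continuous.measurable hS]

theorem measure_le_of_forall_preimage_le (h : IsSelfSimilarMeasure φ r w μ) {S : Set X}
    (hS : MeasurableSet S) {c : ℝ≥0∞} (hc : ∀ a, μ (φ a ⁻¹' S) ≤ c) : μ S ≤ c :=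
  calc μ S = ∑ a, w a * μ (φ a ⁻¹' S) := h.measure_eq_sum hS
    _ ≤ ∑ a, w a * c := by gcongr with a; exact hc a
    _ = c := by rw [← Finset.sum_mul, h.sum_weight, one_mul]

theorem measure_preimage_eq_zero (h : IsSelfSimilarMeasure φ r w μ) {S : Set X}
    (hS : MeasurableSet S) (hS₀ : μ S = 0) (a : A) : μ (φ a ⁻¹' S) = 0 := by
  rw [h.measure_eq_sum hS, Finset.sum_eq_zero_iff] at hS₀
  exact (mul_eq_zero.1 (hS₀ a (Finset.mem_univ a))).resolve_left (h.weight_ne_zero a)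

theorem measure_compl_closedBall_le (h : IsSelfSimilarMeasure φ r w μ) {D t : ℝ} (ht : 0 ≤ t)
    (hrt : ∀ a, r a ≤ t) (hD : ∀ a, ‖φ a 0‖ ≤ D) (x : ℝ) :
    μ (closedBall 0 (D + t * x))ᶜ ≤ μ (closedBall 0 x)ᶜ := by
  refine h.measure_le_of_forall_preimage_le measurableSet_closedBall.compl fun a => ?_
  refine measure_mono fun y hy hyx => hy ?_
  calc dist (φ a y) 0 ≤ dist (φ a y) (φ a 0) + dist (φ a 0) 0 := dist_triangle ..
    _ = ‖φ a 0‖ + r a * dist y 0 := by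
      rw [(h.isSimilarityWith a).dist_eq, dist_zero_right (φ a 0), add_comm]
    _ ≤ D + t * x := by
      gcongr
      exacts [hD a, hrt a, hyx]

theorem exists_ae_mem_closedBall [IsFiniteMeasure μ] (h : IsSelfSimilarMeasure φ r w μ) :
    ∃ R > 0, ∀ᵐ x ∂μ, x ∈ closedBall 0 R := by
  obtain ⟨s, t, -, ht, ht₁, hst⟩ := h.exists_ratio_bounds
  let D := ∑ a, ‖φ a 0‖
  have hD (a : A) : ‖φ a 0‖ ≤ D :=
    Finset.single_le_sum (f := fun a => ‖φ a 0‖) (fun _ _ => norm_nonneg _) (Finset.mem_univ a)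
  have : 0 ≤ D := Finset.sum_nonneg fun _ _ => norm_nonneg _
  have ht₁' : 0 < 1 - t := sub_pos.2 ht₁
  let R := D / (1 - t)
  have : 0 ≤ R := by positivity
  have hfix : D + t * R = R := by
    simp only [R]
    field_simp
    ring
  have hcontract (k : ℕ) (x : ℝ) :
      μ (closedBall 0 (R + t ^ k * x))ᶜ ≤ μ (closedBall 0 (R + x))ᶜ := by
    induction k with
    | zero => simp
    | succ k ih =>
      refine le_trans (le_of_eq ?_)
        ((h.measure_compl_closedBall_le ht.le (fun a => (hst a).2) hD _).trans ih)
      rw [mul_add, ← add_assoc, hfix, ← mul_assoc, ← pow_succ']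
  have htail : ∀ x > 0, μ (closedBall 0 (R + 1))ᶜ ≤ μ (closedBall 0 (R + x))ᶜ := fun x hx => by
    obtain ⟨k, hk⟩ := exists_pow_lt_of_lt_one (inv_pos.2 hx) ht₁
    have hk₁ : t ^ k * x ≤ 1 := (le_inv_mul_iff₀' hx).1 (by simpa using hk.le)
    refine (measure_mono <| Set.compl_subset_compl.2 <| closedBall_subset_closedBall ?_).trans
      (hcontract k x)
    gcongr
  refine ⟨R + 1, by positivity, mem_ae_iff.2 <| le_antisymm ?_ bot_le⟩
  exact ge_of_tendsto
    ((tendsto_measure_compl_closedBall μ 0).comp (tendsto_atTop_add_const_left _ R tendsto_id))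
    ((eventually_gt_atTop 0).mono htail)

theorem mapsTo_support [HereditarilyLindelofSpace X] (h : IsSelfSimilarMeasure φ r w μ) (a : A) :
    Set.MapsTo (φ a) μ.support μ.support :=
  Measure.support_subset_of_isClosed
    (Measure.isClosed_support.preimage (h.isSimilarityWith a).continuous)
    (h.measure_preimage_eq_zero Measure.isClosed_support.measurableSet.compl
      Measure.measure_compl_support a)

end Normed

variable {A : Type*} [Fintype A] [FiniteDimensional ℝ E] [StrictConvexSpace ℝ E]
  [MeasurableSpace E] [BorelSpace E] {φ : A → E → E} {r : A → ℝ} {w : A → ℝ≥0∞} {μ : Measure E}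
  [IsProbabilityMeasure μ]

theorem affineSpan_support_eq_top (h : IsSelfSimilarMeasure φ r w μ)
    (hirr : AffinelyIrreducible φ) : affineSpan ℝ μ.support = ⊤ := by
  have := FiniteDimensional.proper ℝ E
  by_contra htop
  refine hirr ⟨affineSpan ℝ μ.support, ?_, htop, fun a => ?_⟩
  · exact (Measure.nonempty_support (IsProbabilityMeasure.ne_zero μ)).mono (subset_affineSpan ℝ _)
  · obtain ⟨g, hg⟩ := (h.isSimilarityWith a).exists_affineMap
    rw [← hg, ← AffineSubspace.coe_map, AffineSubspace.map_span, hg]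
    exact affineSpan_mono ℝ (h.mapsTo_support a).image_subset

theorem measure_preimage_singleton_lt_one (h : IsSelfSimilarMeasure φ r w μ)
    (hirr : AffinelyIrreducible φ) {f : StrongDual ℝ E} (hf : f ≠ 0) (b : ℝ) :
    μ (f ⁻¹' {b}) < 1 := by
  refine prob_le_one.lt_of_ne fun hone => hf ?_
  have hclosed : IsClosed (f ⁻¹' {b}) := isClosed_singleton.preimage f.continuous
  have hsupport : μ.support ⊆ f ⁻¹' {b} := Measure.support_subset_of_isClosed hclosed <|
    (mem_ae_iff_prob_eq_one hclosed.measurableSet).2 hone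
  let H : AffineSubspace ℝ E := (affineSpan ℝ {b}).comap (f : E →ₗ[ℝ] ℝ).toAffineMap
  have hspan : affineSpan ℝ μ.support ≤ H := affineSpan_le.2 fun x hx =>
    (AffineSubspace.mem_affineSpan_singleton ℝ ℝ).2 (hsupport hx)
  have hconst (x : E) : f x = b := by
    rw [h.affineSpan_support_eq_top hirr] at hspan
    exact (AffineSubspace.mem_affineSpan_singleton ℝ ℝ).1 (hspan (AffineSubspace.mem_top ℝ E x))
  ext x
  rw [hconst x, ← hconst 0, map_zero, zero_apply]

theorem exists_measure_le_slabConcentration_mul (h : IsSelfSimilarMeasure φ r w μ) :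
    ∃ K > 0, ∀ τ ρ, 0 ≤ τ → 0 < ρ → ρ ≤ K → ∀ S T : Set E, MeasurableSet S → MeasurableSet T →
      IsFlatIn S T ρ (τ * ρ) → μ S ≤ slabConcentration μ (τ * K) * μ T := by
  obtain ⟨R, hR, hμR⟩ := h.exists_ae_mem_closedBall
  obtain ⟨s, t, hs, -, ht, hst⟩ := h.exists_ratio_bounds
  refine ⟨R / s, by positivity, fun τ ρ hτ hρ hρs => ?_⟩
  refine scale_induction
    (P := fun ρ => ∀ S T : Set E, MeasurableSet S → MeasurableSet T → IsFlatIn S T ρ (τ * ρ) →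
      μ S ≤ slabConcentration μ (τ * (R / s)) * μ T)
    hs (fun a => (hst a).1) (fun a => (hst a).2) ht hR
    (fun ρ hRρ hρs S T _ _ hflat => ?_) (fun ρ _ _ ih S T hS hT hflat => ?_) hρ hρs
  · have hball : ∀ᵐ x ∂μ, x ∈ closedBall 0 ρ := hμR.mono fun x hx =>
      closedBall_subset_closedBall hRρ hx
    refine (hflat.measure_le hball).trans ?_
    gcongr
    exact slabConcentration_mono μ (by gcongr)
  · have hpre (a : A) : μ (φ a ⁻¹' S) ≤ slabConcentration μ (τ * (R / s)) * μ (φ a ⁻¹' T) := by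
      have hφ := h.isSimilarityWith a
      refine ih a _ _ (hφ.continuous.measurable hS) (hφ.continuous.measurable hT) ?_
      rw [← mul_div_assoc]
      exact hφ.isFlatIn_preimage hflat
    calc μ S = ∑ a, w a * μ (φ a ⁻¹' S) := h.measure_eq_sum hS
      _ ≤ ∑ a, w a * (slabConcentration μ (τ * (R / s)) * μ (φ a ⁻¹' T)) := by
        gcongr with a
        exact hpre a
      _ = slabConcentration μ (τ * (R / s)) * μ T := by
        simp only [h.measure_eq_sum hT, Finset.mul_sum, mul_left_comm]

theorem exists_slabConcentration_mul_le (h : IsSelfSimilarMeasure φ r w μ) :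
    ∃ K > 0, ∀ l ε, 0 ≤ l → l ≤ 1 / 2 → 0 < ε → ε ≤ K →
      slabConcentration μ (l * ε) ≤ slabConcentration μ (l * K) * slabConcentration μ ε := by
  obtain ⟨K, hK, hμ⟩ := h.exists_measure_le_slabConcentration_mul
  refine ⟨4 * K, by positivity, fun l ε hl hl₂ hε hεK => ?_⟩
  refine slabConcentration_le_iff.2 fun f hf b => ?_
  have hflat : IsFlatIn (slab f b (l * ε)) (slab f b ε) (ε / 4) (4 * l * (ε / 4)) := by
    convert! isFlatIn_slab hf (ρ := ε / 4) (ε := l * ε) (ε' := ε) ?_ using 1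
    · ring
    · nlinarith
  calc μ (slab f b (l * ε)) ≤ slabConcentration μ (4 * l * K) * μ (slab f b ε) :=
        hμ _ _ (by positivity) (by positivity) (by linarith) _ _ (isClosed_slab f b _).measurableSet
          (isClosed_slab f b _).measurableSet hflat
    _ ≤ slabConcentration μ (l * (4 * K)) * slabConcentration μ ε := by
      rw [mul_comm 4 l, mul_assoc]
      gcongr
      exact measure_slab_le hf b ε

theorem exists_slabConcentration_le_rpow (h : IsSelfSimilarMeasure φ r w μ)
    (hirr : AffinelyIrreducible φ) :
    ∃ L α : ℝ, 0 < L ∧ 0 < α ∧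
      ∀ ε, 0 < ε → slabConcentration μ ε ≤ ENNReal.ofReal ((L * ε) ^ α) := by
  obtain ⟨R, -, hR⟩ := h.exists_ae_mem_closedBall
  obtain ⟨ε₁, hε₁, hlt⟩ := exists_slabConcentration_lt hR one_pos fun f hf b =>
    h.measure_preimage_singleton_lt_one hirr (norm_ne_zero_iff.1 (hf ▸ one_ne_zero)) b
  obtain ⟨K, hK, hmul⟩ := h.exists_slabConcentration_mul_le
  obtain ⟨θ, hθ, hθ₁⟩ := ENNReal.lt_iff_exists_nnreal_btwn.1 hlt
  let l := min (ε₁ / K) (1 / 2)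
  have hl : 0 < l := by positivity
  have hl₁ : l < 1 := (min_le_right _ _).trans_lt one_half_lt_one
  refine exists_le_ofReal_rpow_of_le_mul (θ := θ) (M := l⁻¹) (ε₀ := l * K)
    (ENNReal.coe_pos.1 (bot_le.trans_lt hθ)) (by exact_mod_cast hθ₁) ((one_lt_inv₀ hl).2 hl₁)
    (by positivity) (slabConcentration_le_one μ) fun ε hε hεK => ?_
  calc slabConcentration μ ε = slabConcentration μ (l * (l⁻¹ * ε)) := by
        rw [mul_inv_cancel_left₀ hl.ne']
    _ ≤ slabConcentration μ (l * K) * slabConcentration μ (l⁻¹ * ε) :=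
      hmul _ _ hl.le (min_le_right _ _) (by positivity) ((inv_mul_le_iff₀ hl).2 hεK.le)
    _ ≤ θ * slabConcentration μ (l⁻¹ * ε) := by
      gcongr
      refine (slabConcentration_mono μ ?_).trans hθ.le
      exact (le_div_iff₀ hK).1 (min_le_left _ _)

end IsSelfSimilarMeasure

theorem exists_forall_apply_eq_of_affineSpan_ne_top [FiniteDimensional ℝ E] {Y : Set E}
    (hne : Y.Nonempty) (hY : affineSpan ℝ Y ≠ ⊤) :
    ∃ f : StrongDual ℝ E, ‖f‖ = 1 ∧ ∃ b, ∀ y ∈ Y, f y = b := by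
  have hdir : vectorSpan ℝ Y < ⊤ := by
    rwa [lt_top_iff_ne_top, ← direction_affineSpan, Ne,
      AffineSubspace.direction_eq_top_iff_of_nonempty ((affineSpan_nonempty ℝ).2 hne)]
  obtain ⟨g, hg, hker⟩ := Submodule.exists_le_ker_of_lt_top _ hdir
  have hg' : ‖LinearMap.toContinuousLinearMap g‖ ≠ 0 := by simpa using hg
  obtain ⟨y₀, hy₀⟩ := hne
  refine ⟨‖LinearMap.toContinuousLinearMap g‖⁻¹ • LinearMap.toContinuousLinearMap g, ?_,
    ‖LinearMap.toContinuousLinearMap g‖⁻¹ * g y₀, fun y hy => ?_⟩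
  · rw [norm_smul, norm_inv, norm_norm, inv_mul_cancel₀ hg']
  · have hgy : g (y - y₀) = 0 := hker (vsub_mem_vectorSpan ℝ hy hy₀)
    rw [map_sub, sub_eq_zero] at hgy
    simp [hgy]

theorem exists_affineIndependent_fin {K V : Type*} [DivisionRing K] [AddCommGroup V] [Module K V]
    [FiniteDimensional K V] {n : ℕ} (hn : Module.finrank K V = n) {Y : Set V}
    (hY : affineSpan K Y = ⊤) :
    ∃ y : Fin (n + 1) → V, (∀ k, y k ∈ Y) ∧ AffineIndependent K y := by
  obtain ⟨t, htY, hspan, hind⟩ := exists_affineIndependent K V Y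
  have : Fintype t := (finite_set_of_fin_dim_affineIndependent K hind).fintype
  have hcard : Fintype.card t = n + 1 := by
    rw [← hn, ← hind.affineSpan_eq_top_iff_card_eq_finrank_add_one, Subtype.range_coe, hspan, hY]
  let e := (Fintype.equivFinOfCardEq hcard).symm
  exact ⟨fun k => e k, fun k => htY (e k).2, hind.comp_embedding e.toEmbedding⟩

section Simplex

variable {d : ℕ}

/-- The determinant with rows `(1, y k)`, which is `d!` times the signed volume of the simplex
with vertices `y k`. -/
def simplexDet (y : Fin (d + 1) → EuclideanSpace ℝ (Fin d)) : ℝ :=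
  (Matrix.of fun k => (Fin.cons 1 (y k) : Fin (d + 1) → ℝ)).det

theorem simplexDet_sub_const (y : Fin (d + 1) → EuclideanSpace ℝ (Fin d))
    (z : EuclideanSpace ℝ (Fin d)) : simplexDet (fun k => y k - z) = simplexDet y := by
  rw [simplexDet, simplexDet, ← Matrix.det_transpose, ← Matrix.det_transpose (Matrix.of _)]
  refine Matrix.det_eq_of_forall_row_eq_smul_add_const (Fin.cons 0 fun j => -z j) 0 rfl
    fun j k => ?_
  cases j using Fin.cases with
  | zero => simp
  | succ j => simp [sub_eq_add_neg]

theorem simplexDet_ne_zero {y : Fin (d + 1) → EuclideanSpace ℝ (Fin d)}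
    (hy : AffineIndependent ℝ y) : simplexDet y ≠ 0 := by
  intro hdet
  obtain ⟨v, hv, hvy⟩ := Matrix.exists_vecMul_eq_zero_iff.2 hdet
  have hcol (j : Fin (d + 1)) : ∑ k, v k * (Fin.cons 1 (y k) : Fin (d + 1) → ℝ) j = 0 :=
    congrFun hvy j
  have hsum : ∑ k, v k = 0 := by simpa using hcol 0
  have hcomb : ∑ k, v k • y k = 0 := by
    ext j
    simpa using hcol j.succ
  exact hv (funext fun k => affineIndependent_iff.1 hy _ v hsum hcomb k (Finset.mem_univ k))

theorem abs_simplexDet_le {y : Fin (d + 1) → EuclideanSpace ℝ (Fin d)}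
    {z : EuclideanSpace ℝ (Fin d)} {ρ : ℝ} (hy : ∀ k, y k ∈ closedBall z ρ) :
    |simplexDet y| ≤ (d + 1).factorial * ρ ^ d := by
  have hcoord (k : Fin (d + 1)) (j : Fin d) : |(y k - z) j| ≤ ρ :=
    (PiLp.norm_apply_le (y k - z) j).trans ((dist_eq_norm (y k) z).symm.trans_le (hy k))
  have hminor (k : Fin (d + 1)) :
      |(Matrix.of fun i j => (y (k.succAbove i) - z) j).det| ≤ d.factorial * ρ ^ d := by
    simpa using Matrix.det_le (abv := AbsoluteValue.abs)
      (A := Matrix.of fun i j => (y (k.succAbove i) - z) j) fun i j => hcoord _ j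
  rw [← simplexDet_sub_const y z, simplexDet, Matrix.det_succ_column_zero]
  calc _ ≤ ∑ k : Fin (d + 1), |(Matrix.of fun i j => (y (k.succAbove i) - z) j).det| := by
        refine (Finset.abs_sum_le_sum_abs _ _).trans_eq (Finset.sum_congr rfl fun k _ => ?_)
        rw [abs_mul, abs_mul, abs_pow, abs_neg, abs_one, one_pow, one_mul]
        simp only [Matrix.of_apply, Fin.cons_zero, abs_one, one_mul]
        rfl
    _ ≤ ∑ _k : Fin (d + 1), d.factorial * ρ ^ d := Finset.sum_le_sum fun k _ => hminor k
    _ = (d + 1).factorial * ρ ^ d := by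
      rw [Finset.sum_const, Finset.card_univ, Fintype.card_fin, nsmul_eq_mul,
        Nat.factorial_succ, Nat.cast_mul, mul_assoc]

theorem exists_int_eq_prod_mul_simplexDet {y : Fin (d + 1) → EuclideanSpace ℝ (Fin d)}
    {q : Fin (d + 1) → ℕ} {p : Fin (d + 1) → Fin d → ℤ} (hp : ∀ k j, q k * y k j = p k j) :
    ∃ N : ℤ, (∏ k, (q k : ℝ)) * simplexDet y = N := by
  refine ⟨(Matrix.of fun k => (Fin.cons (q k : ℤ) (p k) : Fin (d + 1) → ℤ)).det, ?_⟩
  rw [simplexDet, ← Matrix.det_mul_column, Int.cast_det]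
  congr 1
  ext k j
  cases j using Fin.cases with
  | zero => simp
  | succ j => simp [hp]

/-- The rational points of `ℝ^d` with a common denominator at most `t`. -/
def ratPoints (d : ℕ) (t : ℝ) : Set (EuclideanSpace ℝ (Fin d)) :=
  {y | ∃ q : ℕ, 0 < q ∧ (q : ℝ) ≤ t ∧ ∃ p : Fin d → ℤ, ∀ j, q * y j = p j}

theorem simplexDet_eq_zero_of_mem_ratPoints {y : Fin (d + 1) → EuclideanSpace ℝ (Fin d)}
    {z : EuclideanSpace ℝ (Fin d)} {ρ t : ℝ} (hy : ∀ k, y k ∈ ratPoints d t ∩ closedBall z ρ)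
    (hsmall : (d + 1).factorial * ρ ^ d * t ^ (d + 1) < 1) : simplexDet y = 0 := by
  choose q hq hqt p hp using fun k => (hy k).1
  obtain ⟨N, hN⟩ := exists_int_eq_prod_mul_simplexDet hp
  have hprod₀ : 0 ≤ ∏ k, (q k : ℝ) := Finset.prod_nonneg fun k _ => Nat.cast_nonneg (q k)
  have hprod : ∏ k, (q k : ℝ) ≤ t ^ (d + 1) := by
    simpa using Finset.prod_le_prod (s := Finset.univ) (fun k _ => Nat.cast_nonneg (q k))
      fun k _ => hqt k
  have hN₁ : |(N : ℝ)| < 1 :=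
    calc |(N : ℝ)| = |simplexDet y| * ∏ k, (q k : ℝ) := by
          rw [← hN, abs_mul, mul_comm, abs_of_nonneg hprod₀]
      _ ≤ (d + 1).factorial * ρ ^ d * t ^ (d + 1) := by
        gcongr
        · exact (abs_nonneg _).trans (abs_simplexDet_le fun k => (hy k).2)
        · exact abs_simplexDet_le fun k => (hy k).2
      _ < 1 := hsmall
  have hN₀ : N = 0 := Int.abs_lt_one_iff.1 (by exact_mod_cast hN₁)
  rw [hN₀, Int.cast_zero] at hN
  exact (mul_eq_zero.1 hN).resolve_left
    (Finset.prod_ne_zero_iff.2 fun k _ => by exact_mod_cast (hq k).ne')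

theorem exists_forall_ratPoints_apply_eq {z : EuclideanSpace ℝ (Fin d)} {ρ t : ℝ}
    (hne : (ratPoints d t ∩ closedBall z ρ).Nonempty)
    (hsmall : (d + 1).factorial * ρ ^ d * t ^ (d + 1) < 1) :
    ∃ f : StrongDual ℝ (EuclideanSpace ℝ (Fin d)), ‖f‖ = 1 ∧
      ∃ b, ∀ y ∈ ratPoints d t ∩ closedBall z ρ, f y = b := by
  refine exists_forall_apply_eq_of_affineSpan_ne_top hne fun htop => ?_
  obtain ⟨y, hyY, hy⟩ := exists_affineIndependent_fin finrank_euclideanSpace_fin htop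
  exact simplexDet_ne_zero hy (simplexDet_eq_zero_of_mem_ratPoints hyY hsmall)

end Simplex

section Dirichlet

variable {d : ℕ} {u δ η : ℝ}

/-- The points `x` such that `q • x` is within `δ` of `ℤ ^ d`, coordinatewise, for some
denominator `q` between `(u / 2) ^ d` and `u ^ d`. -/
def approxSet (d : ℕ) (u δ : ℝ) : Set (EuclideanSpace ℝ (Fin d)) :=
  {x | ∃ q : ℕ, (u / 2) ^ d ≤ q ∧ (q : ℝ) ≤ u ^ d ∧ ∃ p : Fin d → ℤ, ∀ j, |q * x j - p j| ≤ δ}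

theorem measurableSet_approxSet (d : ℕ) (u δ : ℝ) : MeasurableSet (approxSet d u δ) := by
  simp only [approxSet, Set.ofPred_exists, Set.ofPred_and, Set.ofPred_forall]
  refine .iUnion fun q => (MeasurableSet.const _).inter <| (MeasurableSet.const _).inter <|
    .iUnion fun p => .iInter fun j => ?_
  exact measurableSet_le (by fun_prop) measurable_const

theorem exists_ratPoints_dist_le (hu : 0 < u) (hδ : 0 ≤ δ) {x : EuclideanSpace ℝ (Fin d)}
    (hx : x ∈ approxSet d u δ) :
    ∃ y ∈ ratPoints d (u ^ d), dist x y ≤ √d * 2 ^ d * δ / u ^ d := by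
  obtain ⟨q, hqu, hqu', p, hp⟩ := hx
  have hq : (0 : ℝ) < q := lt_of_lt_of_le (by positivity) hqu
  refine ⟨WithLp.toLp 2 fun j => p j / q, ⟨q, by exact_mod_cast hq, hqu', p, fun j => ?_⟩, ?_⟩
  · simp only [mul_div_cancel₀ _ hq.ne']
  have hcoord (j : Fin d) : dist (x j) (p j / q) ≤ 2 ^ d * δ / u ^ d :=
    calc dist (x j) (p j / q) = |q * x j - p j| / q := by
          rw [Real.dist_eq, ← abs_of_pos hq, ← abs_div, abs_of_pos hq, sub_div,
            mul_div_cancel_left₀ _ hq.ne']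
      _ ≤ δ / (u / 2) ^ d := by gcongr; exact hp j
      _ = 2 ^ d * δ / u ^ d := by rw [div_pow, div_div_eq_mul_div, mul_comm]
  rw [EuclideanSpace.dist_eq]
  calc √(∑ j, dist (x j) (p j / q) ^ 2) ≤ √(∑ _j : Fin d, (2 ^ d * δ / u ^ d) ^ 2) := by
        gcongr with j; exact hcoord j
    _ = √d * (2 ^ d * δ / u ^ d) := by
      rw [Finset.sum_const, Finset.card_univ, Fintype.card_fin, nsmul_eq_mul,
        Real.sqrt_mul d.cast_nonneg, Real.sqrt_sq (by positivity)]
    _ = √d * 2 ^ d * δ / u ^ d := by ring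

theorem isFlatIn_approxSet (hu : 0 < u) (hδ : 0 ≤ δ)
    (hη : (d + 1).factorial * (2 * η) ^ d < 1) (hδη : √d * 2 ^ d * (δ * u) ≤ η) :
    IsFlatIn (approxSet d u δ) Set.univ (η / u ^ (d + 1)) (√d * 2 ^ d * δ / u ^ d) := by
  intro z hne
  have hδη' : √d * 2 ^ d * δ / u ^ d ≤ η / u ^ (d + 1) := by
    rw [div_le_div_iff₀ (by positivity) (by positivity), pow_succ, mul_comm (u ^ d), ← mul_assoc]
    gcongr
    rwa [mul_assoc _ δ]
  have hrat : ∀ x ∈ approxSet d u δ ∩ closedBall z (η / u ^ (d + 1)),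
      ∃ y ∈ ratPoints d (u ^ d) ∩ closedBall z (2 * η / u ^ (d + 1)),
        dist x y ≤ √d * 2 ^ d * δ / u ^ d := by
    rintro x ⟨hx, hxz⟩
    obtain ⟨y, hy, hxy⟩ := exists_ratPoints_dist_le hu hδ hx
    refine ⟨y, ⟨hy, ?_⟩, hxy⟩
    calc dist y z ≤ dist x y + dist x z := dist_triangle_left ..
      _ ≤ η / u ^ (d + 1) + η / u ^ (d + 1) := add_le_add (hxy.trans hδη') hxz
      _ = 2 * η / u ^ (d + 1) := by ring
  have hsmall : (d + 1).factorial * (2 * η / u ^ (d + 1)) ^ d * (u ^ d) ^ (d + 1) < 1 := by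
    convert! hη using 1
    rw [mul_assoc, div_pow, ← pow_mul, ← pow_mul, mul_comm (d + 1) d,
      div_mul_cancel₀ _ (by positivity)]
  obtain ⟨x₀, hx₀⟩ := hne
  obtain ⟨y₀, hy₀, -⟩ := hrat x₀ hx₀
  obtain ⟨f, hf, b, hb⟩ := exists_forall_ratPoints_apply_eq ⟨y₀, hy₀⟩ hsmall
  refine ⟨Set.subset_univ _, f, hf, b, fun x hx => ?_⟩
  obtain ⟨y, hy, hxy⟩ := hrat x hx
  exact (hb y hy ▸ dist_apply_le_of_norm_eq_one hf x y).trans hxy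

theorem exists_factorial_mul_pow_lt_one (hd : 0 < d) {K : ℝ} (hK : 0 < K) :
    ∃ η, 0 < η ∧ η ≤ K ∧ (d + 1).factorial * (2 * η) ^ d < 1 := by
  have hlim : Tendsto (fun η : ℝ => (d + 1).factorial * (2 * η) ^ d) (𝓝[>] 0) (𝓝 0) :=
    tendsto_nhdsWithin_of_tendsto_nhds <|
      Continuous.tendsto' (by fun_prop) _ _ (by simp [hd.ne'])
  obtain ⟨η, hη, hηK⟩ := ((hlim.eventually_lt_const one_pos).and (Ioc_mem_nhdsGT hK)).exists
  exact ⟨η, hηK.1, hηK.2, hη⟩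

theorem IsSelfSimilarMeasure.exists_measure_approxSet_le {A : Type*} [Fintype A]
    {φ : A → EuclideanSpace ℝ (Fin d) → EuclideanSpace ℝ (Fin d)} {r : A → ℝ} {w : A → ℝ≥0∞}
    {μ : Measure (EuclideanSpace ℝ (Fin d))} [IsProbabilityMeasure μ] (hd : 0 < d)
    (h : IsSelfSimilarMeasure φ r w μ) (hirr : AffinelyIrreducible φ) :
    ∃ L α : ℝ, 0 < L ∧ 0 < α ∧ ∀ u δ, 1 ≤ u → 0 < δ →
      μ (approxSet d u δ) ≤ ENNReal.ofReal ((L * (δ * u)) ^ α) := by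
  obtain ⟨K, hK, hflat⟩ := h.exists_measure_le_slabConcentration_mul
  obtain ⟨L, α, hL, hα, hdecay⟩ := h.exists_slabConcentration_le_rpow hirr
  obtain ⟨η, hη, hηK, hsmall⟩ := exists_factorial_mul_pow_lt_one hd hK
  let C := √d * 2 ^ d / η
  have : 0 < C := by positivity
  refine ⟨C * max (L * K) 1, α, by positivity, hα, fun u δ hu hδ => ?_⟩
  have hu₀ : 0 < u := one_pos.trans_le hu
  rcases le_or_gt (C * (δ * u)) 1 with hle | hgt
  · have hδη : √d * 2 ^ d * (δ * u) ≤ η := by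
      rwa [div_mul_eq_mul_div, div_le_one hη] at hle
    have hwidth : C * (δ * u) * (η / u ^ (d + 1)) = √d * 2 ^ d * δ / u ^ d := by
      simp only [C]
      field_simp
      ring
    calc μ (approxSet d u δ)
        ≤ slabConcentration μ (C * (δ * u) * K) * μ Set.univ :=
          hflat (C * (δ * u)) (η / u ^ (d + 1)) (by positivity) (by positivity)
            ((div_le_self hη.le (one_le_pow₀ hu)).trans hηK) _ _ (measurableSet_approxSet d u δ)
            .univ (hwidth ▸ isFlatIn_approxSet hu₀ hδ.le hsmall hδη)
      _ ≤ ENNReal.ofReal ((L * (C * (δ * u) * K)) ^ α) := by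
        rw [measure_univ, mul_one]
        exact hdecay _ (by positivity)
      _ ≤ ENNReal.ofReal ((C * max (L * K) 1 * (δ * u)) ^ α) := by
        rw [show L * (C * (δ * u) * K) = C * (L * K) * (δ * u) by ring]
        gcongr
        exact le_max_left _ _
  · refine prob_le_one.trans (ENNReal.one_le_ofReal.2 (Real.one_le_rpow ?_ hα.le))
    calc 1 ≤ C * 1 * (δ * u) := by rw [mul_one]; exact hgt.le
      _ ≤ C * max (L * K) 1 * (δ * u) := by gcongr; exact le_max_right _ _

/-- The points at which Dirichlet's theorem is improved by the factor `c` at time `2 ^ (d * m)`,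
so that the bound `c * t ^ (-1 / d)` becomes `c / 2 ^ m`. -/
def dirichletImprovable (d m : ℕ) (c : ℝ) : Set (EuclideanSpace ℝ (Fin d)) :=
  {x | ∃ q : ℕ, 0 < q ∧ q < 2 ^ (d * m) ∧ ∀ j, |q * x j - round (q * x j)| ≤ c / 2 ^ m}

theorem dirichletImprovable_subset (hd : 0 < d) (m : ℕ) (c : ℝ) :
    dirichletImprovable d m c ⊆ ⋃ i ∈ Finset.range m, approxSet d (2 ^ (i + 1)) (c / 2 ^ m) := by
  rintro x ⟨q, hq, hqm, hx⟩
  have hbase : 1 < 2 ^ d := Nat.one_lt_two_pow hd.ne'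
  have hlog : (2 ^ d) ^ Nat.log (2 ^ d) q ≤ q := Nat.pow_log_le_self _ hq.ne'
  have hlog' : q ≤ (2 ^ d) ^ (Nat.log (2 ^ d) q + 1) := (Nat.lt_pow_succ_log_self hbase q).le
  refine Set.mem_biUnion (x := Nat.log (2 ^ d) q)
    (Finset.mem_coe.2 <| Finset.mem_range.2 <| Nat.log_lt_of_lt_pow hq.ne' (by rwa [← pow_mul]))
    ⟨q, ?_, ?_, fun j => round (q * x j), hx⟩
  · rw [pow_succ, mul_div_cancel_right₀ _ two_ne_zero, pow_right_comm]
    exact_mod_cast hlog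
  · rw [pow_right_comm]
    exact_mod_cast hlog'

theorem eventually_mem_dirichletImprovable (hd : 0 < d) {x : EuclideanSpace ℝ (Fin d)}
    (hx : x ∈ Sing d) {c : ℝ} (hc : 0 < c) : ∀ᶠ m in atTop, x ∈ dirichletImprovable d m c := by
  obtain ⟨T, -, hT⟩ := hx c hc
  have htime : Tendsto (fun m : ℕ => (2 : ℝ) ^ (d * m)) atTop atTop :=
    (tendsto_pow_atTop_atTop_of_one_lt one_lt_two).comp
      (tendsto_id.const_mul_atTop' hd)
  filter_upwards [htime.eventually_ge_atTop T] with m hm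
  obtain ⟨q, hq, hqm, hqx⟩ := hT _ hm
  refine ⟨q, hq, by exact_mod_cast hqm, fun j => (hqx j).trans_eq ?_⟩
  rw [mul_comm d m, pow_mul, neg_div, one_div, Real.rpow_neg (by positivity),
    Real.pow_rpow_inv_natCast (by positivity) hd.ne', div_eq_mul_inv]

theorem measure_dirichletImprovable_le {μ : Measure (EuclideanSpace ℝ (Fin d))} (hd : 0 < d)
    {L α c : ℝ} (hL : 0 < L) (hα : 0 < α) (hc : 0 < c)
    (hμ : ∀ u δ, 1 ≤ u → 0 < δ → μ (approxSet d u δ) ≤ ENNReal.ofReal ((L * (δ * u)) ^ α))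
    (m : ℕ) :
    μ (dirichletImprovable d m c) ≤ ENNReal.ofReal ((L * c) ^ α * (1 - (1 / 2) ^ α)⁻¹) := by
  set g : ℝ := (1 / 2) ^ α
  have hg₀ : 0 ≤ g := by positivity
  have hg₁ : g < 1 := Real.rpow_lt_one (by norm_num) one_half_lt_one hα
  have hterm : ∀ i ∈ Finset.range m,
      (L * (c / 2 ^ m * 2 ^ (i + 1))) ^ α = (L * c) ^ α * g ^ (m - 1 - i) := fun i hi => by
    have hpow : (2 : ℝ) ^ m = 2 ^ (m - 1 - i) * 2 ^ (i + 1) := by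
      rw [← pow_add]
      congr 1
      grind
    rw [hpow, ← div_div, div_mul_cancel₀ _ (by positivity), Real.rpow_pow_comm (by norm_num),
      ← Real.mul_rpow (by positivity) (by positivity), one_div_pow, mul_one_div, mul_div_assoc]
  calc μ (dirichletImprovable d m c)
      ≤ ∑ i ∈ Finset.range m, μ (approxSet d (2 ^ (i + 1)) (c / 2 ^ m)) :=
        (measure_mono (dirichletImprovable_subset hd m c)).trans (measure_biUnion_finset_le _ _)
    _ ≤ ∑ i ∈ Finset.range m, ENNReal.ofReal ((L * (c / 2 ^ m * 2 ^ (i + 1))) ^ α) := by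
      gcongr with i
      exact hμ _ _ (one_le_pow₀ one_le_two) (by positivity)
    _ = ENNReal.ofReal ((L * c) ^ α * ∑ i ∈ Finset.range m, g ^ i) := by
      rw [← ENNReal.ofReal_sum_of_nonneg fun i _ => by positivity, Finset.sum_congr rfl hterm,
        ← Finset.mul_sum, Finset.sum_range_reflect]
    _ ≤ ENNReal.ofReal ((L * c) ^ α * (1 - g)⁻¹) := by
      gcongr
      exact (summable_geometric_of_lt_one hg₀ hg₁).sum_le_tsum _ (fun _ _ => by positivity)
        |>.trans_eq (tsum_geometric_of_lt_one hg₀ hg₁)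

theorem measure_sing_eq_zero {μ : Measure (EuclideanSpace ℝ (Fin d))} (hd : 0 < d)
    {L α : ℝ} (hL : 0 < L) (hα : 0 < α)
    (hμ : ∀ u δ, 1 ≤ u → 0 < δ → μ (approxSet d u δ) ≤ ENNReal.ofReal ((L * (δ * u)) ^ α)) :
    μ (Sing d) = 0 := by
  have hlim : Tendsto (fun c : ℝ => ENNReal.ofReal ((L * c) ^ α * (1 - (1 / 2) ^ α)⁻¹))
      (𝓝[>] 0) (𝓝 0) := by
    refine tendsto_nhdsWithin_of_tendsto_nhds <| Continuous.tendsto' ?_ _ _ ?_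
    · exact ENNReal.continuous_ofReal.comp <|
        ((continuous_const.mul continuous_id).rpow_const fun _ => .inr hα.le).mul continuous_const
    · simp [Real.zero_rpow hα.ne']
  refine le_antisymm (ge_of_tendsto hlim ?_) bot_le
  filter_upwards [self_mem_nhdsWithin] with c hc
  exact measure_le_of_forall_eventually_mem
    (fun x hx => eventually_mem_dirichletImprovable hd hx hc)
    (measure_dirichletImprovable_le hd hL hα hc hμ)

end Dirichlet

/-- Affinely irreducible self-similar measures give zero mass to singular vectors. -/
theorem self_similar_sing_null
    (d : ℕ) (hd : 0 < d) {A : Type*} [Fintype A]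
    (φ : A → EuclideanSpace ℝ (Fin d) → EuclideanSpace ℝ (Fin d))
    (hΦ : IsSelfSimilarIFS φ) (hirr : AffinelyIrreducible φ)
    (p : A → ℝ) (hp : ∀ a, 0 < p a) (hp1 : ∑ a, p a = 1)
    (μ : Measure (EuclideanSpace ℝ (Fin d))) [IsProbabilityMeasure μ]
    (hstat : μ = ∑ a, ENNReal.ofReal (p a) • Measure.map (φ a) μ) :
    μ (Sing d) = 0 := by
  choose r hr using hΦ.2.1
  have hμ : IsSelfSimilarMeasure φ r (fun a => ENNReal.ofReal (p a)) μ :=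
    { isSimilarityWith := hr
      weight_ne_zero := fun a => (ENNReal.ofReal_pos.2 (hp a)).ne'
      sum_weight := by
        rw [← ENNReal.ofReal_sum_of_nonneg fun a _ => (hp a).le, hp1, ENNReal.ofReal_one]
      stationary := hstat }
  obtain ⟨L, α, hL, hα, happrox⟩ := hμ.exists_measure_approxSet_le hd hirr
  exact measure_sing_eq_zero hd hL hα happrox
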